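/- arXiv:1011.5479 — 3 statements merged into one kernel-verified Lean document; each statement's English description precedes it below -/
import Mathlib

section
/- Let N ≥ 1 and let c ∈ h^{1/2} be N-generic, with simple positive eigenvalues λ_1² > … > λ_N² of Γ_cΓ_c*, normalization constants ν_1, …, ν_N, and let μ_1² > … > μ_N² be the positive eigenvalues of Γ̃_cΓ̃_c*. Then for every j = 1, …, N: ν_j² = (1 − μ_j²/λ_j²) ∏_{k≠j} (λ_j² − μ_k²)/(λ_j² − λ_k²), and for every ℓ = 1, …, N: Σ_{j=1}^N λ_j²ν_j²/(λ_j² − μ_ℓ²)² = (1/(λ_ℓ² − μ_ℓ²)) ∏_{k≠ℓ} (μ_ℓ² − μ_k²)/(μ_ℓ² − λ_k²). -/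
open scoped InnerProductSpace ComplexConjugate ENNReal

noncomputable section

/-- The Hilbert space `ℓ²(ℕ, ℂ)`. -/
abbrev L2 : Type := lp (fun _ : ℕ => ℂ) 2

/-- Membership in the space `h^{1/2}`: `c ∈ ℓ²` and `Σ n |c_n|² < ∞`. -/
def InH12 (c : ℕ → ℂ) : Prop :=
  Memℓp c 2 ∧ Summable (fun n : ℕ => (n : ℝ) * ‖c n‖ ^ 2)

/-- `Γ` is the Hankel operator of symbol `c`: `(Γ x)_n = Σ_p c_{n+p} x_p`. -/
def IsHankelOp (c : ℕ → ℂ) (Γ : L2 →L[ℂ] L2) : Prop :=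
  ∀ x : L2, ∀ n : ℕ, (Γ x : ℕ → ℂ) n = ∑' p : ℕ, c (n + p) * (x : ℕ → ℂ) p

/-- The shifted sequence `c̃ : n ↦ c_{n+1}`. -/
def shiftSeq (c : ℕ → ℂ) : ℕ → ℂ := fun n => c (n + 1)

/-- The operator `Γ Γ*`. -/
def opT (Γ : L2 →L[ℂ] L2) : L2 →L[ℂ] L2 :=
  Γ ∘L ContinuousLinearMap.adjoint Γ

/-- `e₀ = (1,0,0,…) ∈ ℓ²`. -/
def e0 : L2 := lp.single 2 0 1

/-- Generic min–max value `a_j` (for `j ≥ 1`) of a bounded operator `T` on a Hilbert space: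
the infimum over subspaces `F` of dimension at most `j-1` of the supremum of `Re ⟨T h, h⟩`
over unit vectors `h` orthogonal to `F`. -/
def minmaxVal {H : Type*} [NormedAddCommGroup H] [InnerProductSpace ℂ H]
    (T : H →L[ℂ] H) (j : ℕ) : ℝ :=
  ⨅ F : {F : Submodule ℂ H // Module.finrank ℂ F ≤ j - 1},
    ⨆ h : {h : H // ‖h‖ = 1 ∧ ∀ y ∈ F.1, ⟪y, h⟫_ℂ = 0},
      (⟪T h.1, h.1⟫_ℂ).re

/-- `λ_j(Γ)²` (for `j ≥ 1`): the `j`-th min–max value of `Γ Γ*`. -/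
def svalSq (Γ : L2 →L[ℂ] L2) (j : ℕ) : ℝ := minmaxVal (opT Γ) j

lemma summable_sq_of_memℓp {f : ℕ → ℂ} (hf : Memℓp f 2) :
    Summable fun n : ℕ => ‖f n‖ ^ 2 := by
  have h := hf.summable (p := 2) (by norm_num)
  have h2 : ((2 : ℝ≥0∞).toReal) = ((2 : ℕ) : ℝ) := by norm_num
  rw [h2] at h
  simpa [Real.rpow_natCast] using h

/-- The weighted sequence `n ↦ √(1+n) · c_n`, whose `ℓ²` norm is the `h^{1/2}` norm of `c`. -/
def wSeq (c : ℕ → ℂ) : ℕ → ℂ := fun n => (Real.sqrt (1 + (n : ℝ)) : ℂ) * c n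

lemma memℓp_wSeq {c : ℕ → ℂ} (hc : InH12 c) : Memℓp (wSeq c) 2 := by
  apply memℓp_gen
  have h2 : ((2 : ℝ≥0∞).toReal) = ((2 : ℕ) : ℝ) := by norm_num
  rw [h2]
  have hs : Summable fun n : ℕ => (1 + (n : ℝ)) * ‖c n‖ ^ 2 := by
    have := (summable_sq_of_memℓp hc.1).add hc.2
    convert this using 2 with n
    ring
  have key : ∀ n : ℕ, ‖wSeq c n‖ ^ ((2 : ℕ) : ℝ) = (1 + (n : ℝ)) * ‖c n‖ ^ 2 := by
    intro n
    rw [Real.rpow_natCast]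
    have h1 : (0 : ℝ) ≤ 1 + (n : ℝ) := by positivity
    simp only [wSeq, norm_mul, Complex.norm_real, Real.norm_eq_abs,
      abs_of_nonneg (Real.sqrt_nonneg _)]
    rw [mul_pow, Real.sq_sqrt h1]
  exact (summable_congr fun n => key n).mpr hs

/-- The space `h^{1/2}` as a type. -/
def H12 : Type := {c : ℕ → ℂ // InH12 c}

/-- The isometric embedding of `h^{1/2}` into `ℓ²` given by `c ↦ (√(1+n) c_n)_n`;
the `h^{1/2}` norm of `c` is the `ℓ²` norm of its image. -/
def H12.toL2 (c : H12) : L2 := ⟨wSeq c.1, memℓp_wSeq c.2⟩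

lemma H12.toL2_injective : Function.Injective H12.toL2 := by
  intro c d h
  apply Subtype.ext
  funext n
  have h' : wSeq c.1 n = wSeq d.1 n := congrFun (congrArg Subtype.val h) n
  have hs : (Real.sqrt (1 + (n : ℝ)) : ℂ) ≠ 0 := by
    simp only [ne_eq, Complex.ofReal_eq_zero]
    positivity
  exact mul_left_cancel₀ hs h'

/-- The metric (hence the topology) on `h^{1/2}` induced by the `h^{1/2}` norm
`(Σ (1+n)|c_n|²)^{1/2}`, obtained from the isometric embedding into `ℓ²`. -/
instance : MetricSpace H12 := MetricSpace.induced H12.toL2 H12.toL2_injective inferInstance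

/-- `c` is `N`-generic, witnessed by its Hankel operator `Γ`: `Γ` has rank `N`, `Γ Γ*` has `N`
simple positive eigenvalues `λ_1² > … > λ_N²`, the norms `ν_j` of the orthogonal projections
of `e₀` onto the corresponding (one-dimensional) eigenspaces are positive, and `Σ ν_j² < 1`.
(For a simple eigenvalue, the norm of the projection of `e₀` on the eigenspace equals
`|⟨v, e₀⟩|` for any unit eigenvector `v`.) -/
def NGenericData (Γ : L2 →L[ℂ] L2) (N : ℕ) (lam nu : Fin N → ℝ) : Prop :=
  LinearMap.rank Γ.toLinearMap = N ∧
  (∀ j k : Fin N, j < k → lam k < lam j) ∧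
  (∀ j : Fin N, 0 < lam j) ∧
  {z : ℂ | z ≠ 0 ∧ Module.End.HasEigenvalue (opT Γ).toLinearMap z}
    = Set.range (fun j : Fin N => ((lam j : ℂ)) ^ 2) ∧
  (∀ j : Fin N,
    Module.finrank ℂ (Module.End.eigenspace (opT Γ).toLinearMap ((lam j : ℂ) ^ 2)) = 1) ∧
  (∀ j : Fin N, ∃ v : L2, ‖v‖ = 1 ∧ (opT Γ) v = ((lam j : ℂ) ^ 2) • v ∧
    nu j = ‖(⟪v, e0⟫_ℂ)‖) ∧
  (∀ j : Fin N, 0 < nu j) ∧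
  (∑ j : Fin N, (nu j) ^ 2) < 1

/-- Partial fraction identities. -/
lemma pf_aux (N : ℕ) (a b r : Fin N → ℝ) (ha : Function.Injective a) (hb : Function.Injective b)
    (hab : ∀ j l, a j ≠ b l) (h : ∀ l, ∑ j, r j / (a j - b l) = 1) :
    (∀ j, r j * ∏ k ∈ Finset.univ.erase j, (a j - a k) = ∏ k, (a j - b k)) ∧
    (∀ l, (∑ j, r j / (a j - b l) ^ 2) * ∏ k, (b l - a k)
      = - ∏ k ∈ Finset.univ.erase l, (b l - b k)) := by
  classical
  set A : Polynomial ℝ := ∏ k, (Polynomial.X - Polynomial.C (a k)) with hA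
  set B : Polynomial ℝ := ∏ k, (Polynomial.X - Polynomial.C (b k)) with hB
  set Aj : Fin N → Polynomial ℝ :=
    fun j => ∏ k ∈ Finset.univ.erase j, (Polynomial.X - Polynomial.C (a k)) with hAj
  have hAA : ∀ j, A = (Polynomial.X - Polynomial.C (a j)) * Aj j := fun j =>
    (Finset.mul_prod_erase Finset.univ _ (Finset.mem_univ j)).symm
  have hBB : ∀ j, B = (Polynomial.X - Polynomial.C (b j)) *
      ∏ k ∈ Finset.univ.erase j, (Polynomial.X - Polynomial.C (b k)) := fun j =>
    (Finset.mul_prod_erase Finset.univ _ (Finset.mem_univ j)).symm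
  have hAjeval : ∀ j l, (Aj j).eval (b l) = A.eval (b l) / (b l - a j) := by
    intro j l
    have : b l - a j ≠ 0 := sub_ne_zero.2 (hab j l).symm
    rw [hAA j]; simp; field_simp
  have hdA : A.degree = N := by
    rw [hA, Polynomial.degree_prod]; simp
  have hdB : B.degree = N := by
    rw [hB, Polynomial.degree_prod]; simp
  have hmA : A.Monic := Polynomial.monic_prod_of_monic _ _ (fun k _ => Polynomial.monic_X_sub_C _)
  have hmB : B.Monic := Polynomial.monic_prod_of_monic _ _ (fun k _ => Polynomial.monic_X_sub_C _)
  have hsum : ∀ l, ∑ j, r j / (b l - a j) = -1 := by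
    intro l
    rw [← h l, ← Finset.sum_neg_distrib]
    refine Finset.sum_congr rfl fun j _ => ?_
    rw [← neg_sub, div_neg]
  have hAB : A + ∑ j, Polynomial.C (r j) * Aj j = B := by
    have key : (A - B + ∑ j, Polynomial.C (r j) * Aj j) = 0 := by
      refine Polynomial.eq_zero_of_degree_lt_of_eval_index_eq_zero (s := Finset.univ) (v := b) hb.injOn ?_ ?_
      · rw [Finset.card_univ, Fintype.card_fin]
        refine lt_of_le_of_lt (Polynomial.degree_add_le _ _) (max_lt ?_ ?_)
        · rw [← hdA]
          exact Polynomial.degree_sub_lt (hdA.trans hdB.symm) hmA.ne_zero (by rw [hmA, hmB])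
        · refine lt_of_le_of_lt (Polynomial.degree_sum_le _ _) ?_
          rw [Finset.sup_lt_iff (by simp)]
          intro j _
          refine lt_of_le_of_lt (b := (Aj j).degree) (by rw [← Polynomial.smul_eq_C_mul]; exact Polynomial.degree_smul_le _ _) ?_
          rw [hAj]
          simp only
          rw [Polynomial.degree_prod]
          simp only [Polynomial.degree_X_sub_C, Finset.sum_const, Finset.card_erase_of_mem (Finset.mem_univ j),
            Finset.card_univ, Fintype.card_fin, nsmul_eq_mul, mul_one]
          have := j.2
          exact_mod_cast (by omega : N - 1 < N)
      · intro l _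
        have hB0 : B.eval (b l) = 0 := by rw [hBB l]; simp
        simp only [Polynomial.eval_add, Polynomial.eval_sub, Polynomial.eval_finsetSum,
          Polynomial.eval_mul, Polynomial.eval_C, hB0, hAjeval]
        have : ∑ j, r j * (A.eval (b l) / (b l - a j)) = A.eval (b l) * ∑ j, r j / (b l - a j) := by
          rw [Finset.mul_sum]; refine Finset.sum_congr rfl fun j _ => by ring
        rw [this, hsum]; ring
    linear_combination key
  constructor
  · intro j
    have := congrArg (Polynomial.eval (a j)) hAB
    have h0 : ∀ i, i ≠ j → (Aj i).eval (a j) = 0 := by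
      intro i hi
      simp only [hAj, Polynomial.eval_prod]
      exact Finset.prod_eq_zero (Finset.mem_erase.2 ⟨hi.symm, Finset.mem_univ j⟩) (by simp)
    have hA0 : A.eval (a j) = 0 := by rw [hAA j]; simp
    rw [Polynomial.eval_add, Polynomial.eval_finsetSum, hA0,
      Finset.sum_eq_single j (fun i _ hi => by simp [h0 i hi]) (by simp)] at this
    simpa [hAj, hB, Polynomial.eval_prod] using this
  · intro l
    have hd := congrArg (fun p => (Polynomial.derivative p).eval (b l)) hAB
    have hAj' : ∀ j, (Polynomial.derivative (Aj j)).eval (b l) =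
        ((Polynomial.derivative A).eval (b l) - A.eval (b l) / (b l - a j)) / (b l - a j) := by
      intro j
      have h1 : b l - a j ≠ 0 := sub_ne_zero.2 (hab j l).symm
      have := congrArg (fun p => (Polynomial.derivative p).eval (b l)) (hAA j)
      simp [Polynomial.derivative_mul, hAjeval] at this
      rw [this]; field_simp; ring
    have hB' : (Polynomial.derivative B).eval (b l) = ∏ k ∈ Finset.univ.erase l, (b l - b k) := by
      rw [hBB l]
      simp [Polynomial.derivative_mul, Polynomial.eval_prod]
    have hAe : A.eval (b l) = ∏ k, (b l - a k) := by simp [hA, Polynomial.eval_prod]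
    simp only [Polynomial.derivative_add, Polynomial.derivative_sum, Polynomial.derivative_C_mul,
      Polynomial.eval_add, Polynomial.eval_finsetSum, Polynomial.eval_mul, Polynomial.eval_C,
      hAj', hB'] at hd
    rw [← hd, ← hAe]
    have e : ∑ j, r j * (((Polynomial.derivative A).eval (b l) - A.eval (b l) / (b l - a j)) / (b l - a j))
      = (Polynomial.derivative A).eval (b l) * ∑ j, r j / (b l - a j)
        - (∑ j, r j / (a j - b l) ^ 2) * A.eval (b l) := by
      rw [Finset.mul_sum, Finset.sum_mul, ← Finset.sum_sub_distrib]
      refine Finset.sum_congr rfl fun j _ => ?_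
      rw [← neg_sub (b l) (a j), neg_sq, sub_div, div_div, ← sq]; ring
    rw [e, hsum]; ring

lemma inner_single_one (p : ℕ) (x : L2) : ⟪(lp.single 2 p 1 : L2), x⟫_ℂ = (x : ℕ → ℂ) p := by
  rw [lp.inner_single_left]; simp

lemma hankel_single {c : ℕ → ℂ} {Γ : L2 →L[ℂ] L2} (hΓ : IsHankelOp c Γ) (p n : ℕ) :
    (Γ (lp.single 2 p 1) : ℕ → ℂ) n = c (n + p) := by
  rw [hΓ, tsum_eq_single p]
  · simp
  · intro q hq; simp [hq]

lemma hankel_adj_apply {c : ℕ → ℂ} {Γ : L2 →L[ℂ] L2} (hΓ : IsHankelOp c Γ) (x : L2) (p : ℕ) :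
    (ContinuousLinearMap.adjoint Γ x : ℕ → ℂ) p = ∑' n, conj (c (n + p)) * (x : ℕ → ℂ) n := by
  rw [← inner_single_one, ContinuousLinearMap.adjoint_inner_right, lp.inner_eq_tsum]
  refine tsum_congr fun n => ?_
  rw [hankel_single hΓ]; simp [mul_comm]

lemma hankel_adj {c : ℕ → ℂ} {Γ : L2 →L[ℂ] L2} (hΓ : IsHankelOp c Γ) (x : L2) :
    ContinuousLinearMap.adjoint Γ x = star (Γ (star x)) := by
  ext p
  rw [hankel_adj_apply hΓ, lp.star_apply, hΓ, tsum_star]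
  refine tsum_congr fun n => ?_
  simp [mul_comm, add_comm]

lemma opT_shift {c : ℕ → ℂ} {Γ Γt : L2 →L[ℂ] L2} (hΓ : IsHankelOp c Γ)
    (hΓt : IsHankelOp (shiftSeq c) Γt) (x : L2) :
    opT Γ x = opT Γt x + ⟪Γ e0, x⟫_ℂ • Γ e0 := by
  refine ext_inner_right ℂ fun y => ?_
  have hs : ∀ z p, (ContinuousLinearMap.adjoint Γt z : ℕ → ℂ) p
      = (ContinuousLinearMap.adjoint Γ z : ℕ → ℂ) (p + 1) := by
    intro z p
    rw [hankel_adj_apply hΓ, hankel_adj_apply hΓt]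
    refine tsum_congr fun n => ?_
    simp [shiftSeq, add_assoc]
  have h0 : ∀ z, (ContinuousLinearMap.adjoint Γ z : ℕ → ℂ) 0 = ⟪Γ e0, z⟫_ℂ := by
    intro z
    rw [← inner_single_one, ContinuousLinearMap.adjoint_inner_right]; rfl
  have hsplit := (lp.summable_inner (𝕜 := ℂ) (ContinuousLinearMap.adjoint Γ x : L2)
    (ContinuousLinearMap.adjoint Γ y : L2)).tsum_eq_zero_add
  rw [inner_add_left, inner_smul_left]
  simp only [opT, ContinuousLinearMap.comp_apply]
  rw [← ContinuousLinearMap.adjoint_inner_right Γ, ← ContinuousLinearMap.adjoint_inner_right Γt,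
    lp.inner_eq_tsum, lp.inner_eq_tsum, hsplit]
  simp only [hs, h0]
  simp; ring

lemma inner_c {c : ℕ → ℂ} {Γ : L2 →L[ℂ] L2} (hΓ : IsHankelOp c Γ) (l : ℝ) (hl : 0 < l)
    (hdim : Module.finrank ℂ (Module.End.eigenspace (opT Γ).toLinearMap ((l : ℂ) ^ 2)) = 1)
    (v : L2) (hv : ‖v‖ = 1) (hTv : opT Γ v = ((l : ℂ) ^ 2) • v) :
    ‖⟪v, Γ e0⟫_ℂ‖ = l * ‖⟪v, e0⟫_ℂ‖ := by
  have hT : ∀ x, opT Γ x = Γ (star (Γ (star x))) := by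
    intro x; simp [opT, hankel_adj hΓ]
  have hv0 : v ≠ 0 := by rintro rfl; simp at hv
  set u := Γ (star v) with hu
  have hTu : opT Γ u = ((l : ℂ) ^ 2) • u := by
    have : Γ (star u) = ((l : ℂ) ^ 2) • v := by rw [hu, ← hT, hTv]
    rw [hT, this, star_smul, map_smul, ← hu]; simp
  obtain ⟨α, hα⟩ : ∃ α : ℂ, α • v = u := by
    have hvm : v ∈ Module.End.eigenspace (opT Γ).toLinearMap ((l : ℂ) ^ 2) :=
      Module.End.mem_eigenspace_iff.2 hTv
    have hum : u ∈ Module.End.eigenspace (opT Γ).toLinearMap ((l : ℂ) ^ 2) :=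
      Module.End.mem_eigenspace_iff.2 hTu
    obtain ⟨α, hα⟩ := (finrank_eq_one_iff_of_nonzero' (⟨v, hvm⟩ : Module.End.eigenspace (opT Γ).toLinearMap ((l : ℂ) ^ 2))
      (fun h => hv0 (congrArg Subtype.val h))).1 hdim ⟨u, hum⟩
    exact ⟨α, congrArg Subtype.val hα⟩
  have hαn : ‖α‖ = l := by
    have h1 : Γ (star u) = ((l : ℂ) ^ 2) • v := by rw [hu, ← hT, hTv]
    rw [← hα, star_smul, map_smul, ← hu, ← hα, smul_smul] at h1
    have h2 := smul_left_injective ℂ hv0 h1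
    have h3 := congrArg norm h2
    simp only [norm_mul, norm_star, norm_pow, Complex.norm_real, Real.norm_eq_abs, sq_abs] at h3
    nlinarith [norm_nonneg α]
  have e1 : ⟪v, Γ e0⟫_ℂ = (u : ℕ → ℂ) 0 := by
    rw [← ContinuousLinearMap.adjoint_inner_left, hankel_adj hΓ, ← inner_conj_symm, e0, inner_single_one]
    simp [hu]
  have e2 : ‖⟪v, e0⟫_ℂ‖ = ‖(v : ℕ → ℂ) 0‖ := by
    rw [norm_inner_symm, e0, inner_single_one]
  rw [e1, e2, ← hα, ← hαn]
  simp

lemma secular (N : ℕ) (c : ℕ → ℂ)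
    (Γ Γt : L2 →L[ℂ] L2) (hΓ : IsHankelOp c Γ) (hΓt : IsHankelOp (shiftSeq c) Γt)
    (lam nu : Fin N → ℝ) (hgen : NGenericData Γ N lam nu)
    (m : ℝ) (hm : 0 < m) (hmu : Module.End.HasEigenvalue (opT Γt).toLinearMap ((m : ℂ) ^ 2)) :
    (∀ j, lam j ^ 2 ≠ m ^ 2) ∧ ∑ j, lam j ^ 2 * nu j ^ 2 / (lam j ^ 2 - m ^ 2) = 1 := by
  obtain ⟨hrank, hanti, hpos, -, hdim, hv, hnu, -⟩ := hgen
  choose v hv1 hTv hnuv using hv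
  have hinj : ∀ i j, i ≠ j → lam i ^ 2 ≠ lam j ^ 2 := by
    intro i j hij h
    have : lam i = lam j := by
      have := hpos i; have := hpos j; nlinarith
    rcases lt_or_gt_of_ne hij with h1 | h1
    · exact absurd this (hanti _ _ h1).ne'
    · exact absurd this (hanti _ _ h1).ne
  have hsymm : ∀ x y, ⟪opT Γ x, y⟫_ℂ = ⟪x, opT Γ y⟫_ℂ := by
    intro x y
    simp only [opT, ContinuousLinearMap.comp_apply]
    rw [← ContinuousLinearMap.adjoint_inner_right, ContinuousLinearMap.adjoint_inner_left]
  have hvT : ∀ j x, ⟪v j, opT Γ x⟫_ℂ = (lam j : ℂ) ^ 2 * ⟪v j, x⟫_ℂ := by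
    intro j x
    rw [← hsymm, hTv, inner_smul_left]; simp
  have hon : Orthonormal ℂ v := by
    refine ⟨hv1, fun i j hij => ?_⟩
    have := hvT i (v j)
    rw [hTv, inner_smul_right] at this
    have h2 : ((lam i : ℂ) ^ 2 - (lam j : ℂ) ^ 2) * ⟪v i, v j⟫_ℂ = 0 := by linear_combination -this
    refine (mul_eq_zero.1 h2).resolve_left ?_
    refine sub_ne_zero.2 ?_
    exact_mod_cast hinj i j hij
  have hspan : Submodule.span ℂ (Set.range v) = LinearMap.range Γ.toLinearMap := by
    have hfr : Module.finrank ℂ (LinearMap.range Γ.toLinearMap) = N := by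
      rw [Module.finrank]; rw [LinearMap.rank] at hrank; rw [hrank]; simp
    have : FiniteDimensional ℂ (LinearMap.range Γ.toLinearMap) := by
      rw [LinearMap.rank] at hrank
      refine Module.rank_lt_aleph0_iff.1 ?_
      rw [hrank]; exact Cardinal.natCast_lt_aleph0
    refine Submodule.eq_of_le_of_finrank_eq ?_ ?_
    · rw [Submodule.span_le]
      rintro _ ⟨j, rfl⟩
      refine ⟨((lam j : ℂ) ^ 2)⁻¹ • ContinuousLinearMap.adjoint Γ (v j), ?_⟩
      have h0 : (lam j : ℂ) ^ 2 ≠ 0 := by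
        have := (hpos j).ne'; exact pow_ne_zero 2 (by exact_mod_cast this)
      have := hTv j
      simp only [opT, ContinuousLinearMap.comp_apply] at this
      rw [map_smul]
      change _ • Γ _ = _
      rw [this, smul_smul, inv_mul_cancel₀ h0, one_smul]
    · rw [hfr, finrank_span_eq_card hon.linearIndependent, Fintype.card_fin]
  have hexp : ∀ x, x ∈ LinearMap.range Γ.toLinearMap → ∀ y, ⟪y, x⟫_ℂ = ∑ j, ⟪v j, x⟫_ℂ * ⟪y, v j⟫_ℂ := by
    intro x hx y
    rw [← hspan, Submodule.mem_span_range_iff_exists_fun] at hx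
    obtain ⟨a, rfl⟩ := hx
    simp only [hon.inner_right_fintype, inner_sum, inner_smul_right]
  obtain ⟨w, hw⟩ := hmu.exists_hasEigenvector
  have hw0 : w ≠ 0 := hw.2
  have hwT : opT Γt w = ((m : ℂ) ^ 2) • w := hw.apply_eq_smul
  have hm0 : (m : ℂ) ^ 2 ≠ 0 := pow_ne_zero 2 (by exact_mod_cast hm.ne')
  set b := Γ e0 with hb
  have hTw : opT Γ w = ((m : ℂ) ^ 2) • w + ⟪b, w⟫_ℂ • b := by
    rw [← hwT]; exact opT_shift hΓ hΓt w
  have hwr : w ∈ LinearMap.range Γ.toLinearMap := by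
    have : w = ((m : ℂ) ^ 2)⁻¹ • (opT Γ w - ⟪b, w⟫_ℂ • b) := by
      rw [hTw, add_sub_cancel_right, smul_smul, inv_mul_cancel₀ hm0, one_smul]
    rw [this]
    refine Submodule.smul_mem _ _ (Submodule.sub_mem _ ⟨_, rfl⟩ (Submodule.smul_mem _ _ ⟨e0, rfl⟩))
  have hcomp : ∀ j, ((lam j : ℂ) ^ 2 - (m : ℂ) ^ 2) * ⟪v j, w⟫_ℂ = ⟪b, w⟫_ℂ * ⟪v j, b⟫_ℂ := by
    intro j
    have := hvT j w
    rw [hTw, inner_add_right, inner_smul_right, inner_smul_right] at this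
    linear_combination -this
  have hbn : ∀ j, ‖⟪v j, b⟫_ℂ‖ = lam j * nu j := by
    intro j
    rw [hnuv j]
    exact inner_c hΓ (lam j) (hpos j) (hdim j) (v j) (hv1 j) (hTv j)
  have hb0 : ∀ j, ⟪v j, b⟫_ℂ ≠ 0 := by
    intro j h
    have := hbn j
    rw [h, norm_zero] at this
    exact (mul_pos (hpos j) (hnu j)).ne this
  have hbw : ⟪b, w⟫_ℂ ≠ 0 := by
    intro h
    simp only [h, zero_mul, mul_eq_zero, sub_eq_zero] at hcomp
    have hex : ∃ j, ⟪v j, w⟫_ℂ ≠ 0 := by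
      by_contra! hc
      have := hexp w hwr w
      simp [hc] at this
      exact hw0 this
    obtain ⟨j, hj⟩ := hex
    have hjm := (hcomp j).resolve_right hj
    have := hexp w hwr b
    rw [h, Finset.sum_eq_single j] at this
    · rcases mul_eq_zero.1 this.symm with h1 | h1
      · exact hj h1
      · rw [inner_eq_zero_symm] at h1
        exact hb0 j h1
    · intro i _ hij
      rcases hcomp i with h1 | h1
      · exfalso; apply hinj i j hij
        rw [← hjm] at h1; exact_mod_cast h1
      · rw [h1, zero_mul]
    · simp
  have hne : ∀ j, (lam j : ℂ) ^ 2 - (m : ℂ) ^ 2 ≠ 0 := by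
    intro j h
    have := hcomp j
    rw [h, zero_mul] at this
    exact mul_ne_zero hbw (hb0 j) this.symm
  refine ⟨fun j h => hne j (by rw [sub_eq_zero]; exact_mod_cast h), ?_⟩
  have hfin := hexp w hwr b
  have hterm : ∀ j, ⟪v j, w⟫_ℂ * ⟪b, v j⟫_ℂ
      = ⟪b, w⟫_ℂ * ((lam j : ℂ) ^ 2 * (nu j : ℂ) ^ 2 / ((lam j : ℂ) ^ 2 - (m : ℂ) ^ 2)) := by
    intro j
    have h1 : ⟪v j, b⟫_ℂ * ⟪b, v j⟫_ℂ = (lam j : ℂ) ^ 2 * (nu j : ℂ) ^ 2 := by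
      rw [← inner_conj_symm b (v j), Complex.mul_conj, Complex.normSq_eq_norm_sq, hbn]
      push_cast; ring
    have h2 := hne j
    rw [← h1]
    field_simp
    linear_combination ⟪b, v j⟫_ℂ * hcomp j
  simp only [hterm] at hfin
  rw [← Finset.mul_sum] at hfin
  have h3 := mul_left_cancel₀ hbw ((mul_one _).trans hfin)
  have h4 : ((∑ j, lam j ^ 2 * nu j ^ 2 / (lam j ^ 2 - m ^ 2) : ℝ) : ℂ) = 1 := by
    push_cast; exact h3.symm
  exact_mod_cast h4

/-- Explicit formulas for the normalization constants `ν_j` and the quantities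
`b_ℓ = Σ_j λ_j²ν_j²/(λ_j²-μ_ℓ²)²` in terms of the singular values of `Γ_c` and `Γ̃_c`,
for an `N`-generic `c`. -/
theorem statement10 (N : ℕ) (hN : 1 ≤ N) (c : ℕ → ℂ) (hc : InH12 c)
    (Γ Γt : L2 →L[ℂ] L2) (hΓ : IsHankelOp c Γ) (hΓt : IsHankelOp (shiftSeq c) Γt)
    (lam nu : Fin N → ℝ) (hgen : NGenericData Γ N lam nu)
    (mu : Fin N → ℝ)
    (hmupos : ∀ m : Fin N, 0 < mu m)
    (hmuanti : ∀ m l : Fin N, m < l → mu l < mu m)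
    (hmu : {z : ℂ | z ≠ 0 ∧ Module.End.HasEigenvalue (opT Γt).toLinearMap z}
      = Set.range (fun m : Fin N => ((mu m : ℂ)) ^ 2)) :
    (∀ j : Fin N,
      nu j ^ 2 = (1 - mu j ^ 2 / lam j ^ 2) *
        ∏ k ∈ Finset.univ.erase j,
          (lam j ^ 2 - mu k ^ 2) / (lam j ^ 2 - lam k ^ 2)) ∧
    (∀ l : Fin N,
      (∑ j : Fin N, lam j ^ 2 * nu j ^ 2 / (lam j ^ 2 - mu l ^ 2) ^ 2)
        = (1 / (lam l ^ 2 - mu l ^ 2)) *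
          ∏ k ∈ Finset.univ.erase l,
            (mu l ^ 2 - mu k ^ 2) / (mu l ^ 2 - lam k ^ 2)) := by
  have hsec : ∀ l, _ := fun l => secular N c Γ Γt hΓ hΓt lam nu hgen (mu l) (hmupos l)
    (by
      have : ((mu l : ℂ)) ^ 2 ∈ {z : ℂ | z ≠ 0 ∧ Module.End.HasEigenvalue (opT Γt).toLinearMap z} := by
        rw [hmu]; exact ⟨l, rfl⟩
      exact this.2)
  obtain ⟨-, hanti, hpos, -⟩ := hgen
  have hinj : ∀ f : Fin N → ℝ, (∀ j, 0 < f j) → (∀ j k, j < k → f k < f j) →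
      Function.Injective fun j => f j ^ 2 := by
    intro f h1 h2 i j h
    by_contra hij
    have h3 : f i = f j := by
      have := h1 i; have := h1 j; simp only at h; nlinarith
    rcases lt_or_gt_of_ne hij with h4 | h4
    · exact absurd h3 (h2 _ _ h4).ne'
    · exact absurd h3 (h2 _ _ h4).ne
  have hli := hinj lam hpos hanti
  obtain ⟨H1, H2⟩ := pf_aux N (fun j => lam j ^ 2) (fun j => mu j ^ 2)
    (fun j => lam j ^ 2 * nu j ^ 2) hli (hinj mu hmupos hmuanti)
    (fun j l => (hsec l).1 j) (fun l => (hsec l).2)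
  constructor
  · intro j
    have h := H1 j
    have hl : lam j ^ 2 ≠ 0 := pow_ne_zero 2 (hpos j).ne'
    have hp : ∏ k ∈ Finset.univ.erase j, (lam j ^ 2 - lam k ^ 2) ≠ 0 := by
      refine Finset.prod_ne_zero_iff.2 fun k hk => sub_ne_zero.2 fun h => ?_
      exact (Finset.mem_erase.1 hk).1 (hli h).symm
    rw [← Finset.mul_prod_erase Finset.univ _ (Finset.mem_univ j)] at h
    rw [Finset.prod_div_distrib, one_sub_div hl, div_mul_div_comm, eq_div_iff (mul_ne_zero hl hp),
      ← h]
    ring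
  · intro l
    have h := H2 l
    have hp : ∏ k ∈ Finset.univ.erase l, (mu l ^ 2 - lam k ^ 2) ≠ 0 :=
      Finset.prod_ne_zero_iff.2 fun k _ => sub_ne_zero.2 ((hsec l).1 k).symm
    have hl : lam l ^ 2 - mu l ^ 2 ≠ 0 := sub_ne_zero.2 ((hsec l).1 l)
    rw [← Finset.mul_prod_erase Finset.univ (fun k => mu l ^ 2 - lam k ^ 2) (Finset.mem_univ l)] at h
    rw [Finset.prod_div_distrib, div_mul_div_comm, eq_div_iff (mul_ne_zero hl hp)]
    linear_combination -h

end
end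

section
/- The set of all c ∈ h^{1/2} such that every positive eigenvalue of Γ_cΓ_c* is a simple eigenvalue, and such that for every positive eigenvalue of Γ_cΓ_c* the orthogonal projection of e_0 onto the corresponding eigenspace is nonzero, is a dense G_δ subset of the Hilbert space h^{1/2}. -/
open scoped InnerProductSpace ComplexConjugate ENNReal

noncomputable section

namespace HankelAux

open Filter Topology

/-! ### Basic `ℓ²` facts -/

lemma hasSum_sq (x : L2) : HasSum (fun n => ‖(x : ℕ → ℂ) n‖ ^ 2) (‖x‖ ^ 2) := by
  have h := lp.hasSum_norm (p := 2) (by norm_num) x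
  have h2 : ((2 : ℝ≥0∞).toReal) = ((2 : ℕ) : ℝ) := by norm_num
  rw [h2] at h
  simpa [Real.rpow_natCast] using h

lemma memℓp_of_summable_sq {f : ℕ → ℂ} (hf : Summable fun n => ‖f n‖ ^ 2) : Memℓp f 2 := by
  apply memℓp_gen
  have h2 : ((2 : ℝ≥0∞).toReal) = ((2 : ℕ) : ℝ) := by norm_num
  rw [h2]
  simpa [Real.rpow_natCast] using hf

lemma norm_wSeq_sq (c : ℕ → ℂ) (n : ℕ) : ‖wSeq c n‖ ^ 2 = ((n : ℝ) + 1) * ‖c n‖ ^ 2 := by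
  have h1 : (0 : ℝ) ≤ 1 + (n : ℝ) := by positivity
  simp only [wSeq, norm_mul, Complex.norm_real, Real.norm_eq_abs,
    abs_of_nonneg (Real.sqrt_nonneg _)]
  rw [mul_pow, Real.sq_sqrt h1]
  ring

lemma hasSum_weighted (c : H12) :
    HasSum (fun n : ℕ => ((n : ℝ) + 1) * ‖c.1 n‖ ^ 2) (‖c.toL2‖ ^ 2) := by
  have h := hasSum_sq c.toL2
  refine h.congr_fun ?_ |> id
  intro n
  exact (norm_wSeq_sq c.1 n).symm

/-- The double sum. -/
lemma hasSum_double {f : ℕ → ℝ} (hf : ∀ n, 0 ≤ f n) {S : ℝ}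
    (h : HasSum (fun n : ℕ => ((n : ℝ) + 1) * f n) S) :
    HasSum (fun q : ℕ × ℕ => f (q.1 + q.2)) S := by
  have key : ∀ n : ℕ, HasSum (fun q : Finset.HasAntidiagonal.antidiagonal n => f (q.1.1 + q.1.2))
      (((n : ℝ) + 1) * f n) := by
    intro n
    have h1 := hasSum_fintype (fun q : Finset.HasAntidiagonal.antidiagonal n => f (q.1.1 + q.1.2))
    convert h1 using 1
    have : ∀ q : Finset.HasAntidiagonal.antidiagonal n, f (q.1.1 + q.1.2) = f n := by
      intro q
      rw [Finset.HasAntidiagonal.mem_antidiagonal.1 q.2]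
    simp [this]
  rw [← Finset.HasAntidiagonal.sigmaAntidiagonalEquivProd.hasSum_iff]
  have hs : Summable ((fun q : ℕ × ℕ => f (q.1 + q.2)) ∘
      Finset.HasAntidiagonal.sigmaAntidiagonalEquivProd) := by
    refine (summable_sigma_of_nonneg (f := (fun q : ℕ × ℕ => f (q.1 + q.2)) ∘
      Finset.HasAntidiagonal.sigmaAntidiagonalEquivProd) (fun _ => hf _)).2 ⟨fun n => (key n).summable, ?_⟩
    refine h.summable.congr ?_
    intro n
    exact ((key n).tsum_eq).symm
  have h3 := hs.hasSum.sigma (fun n => key n)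
  rw [h.unique h3]
  exact hs.hasSum

lemma summable_row (c : H12) (n : ℕ) : Summable fun p => ‖c.1 (n + p)‖ ^ 2 :=
  ((hasSum_double (fun m => sq_nonneg ‖c.1 m‖) (hasSum_weighted c)).summable).prod_factor n

/-- conjugate of the `n`-th row of the Hankel matrix -/
def row (c : H12) (n : ℕ) : L2 :=
  ⟨fun p => conj (c.1 (n + p)), memℓp_of_summable_sq (by simpa using summable_row c n)⟩

lemma row_apply (c : H12) (n p : ℕ) : (row c n : ℕ → ℂ) p = conj (c.1 (n + p)) := rfl

lemma hasSum_row (c : H12) : HasSum (fun n => ‖row c n‖ ^ 2) (‖c.toL2‖ ^ 2) := by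
  refine (hasSum_double (fun m => sq_nonneg ‖c.1 m‖) (hasSum_weighted c)).prod_fiberwise ?_
  intro n
  have := hasSum_sq (row c n)
  simpa [row_apply] using this

lemma inner_row (c : H12) (n : ℕ) (x : L2) :
    ⟪row c n, x⟫_ℂ = ∑' p, c.1 (n + p) * (x : ℕ → ℂ) p := by
  rw [lp.inner_eq_tsum]
  refine tsum_congr fun p => ?_
  simp [row_apply, mul_comm]

lemma summable_out (c : H12) (x : L2) : Summable fun n => ‖⟪row c n, x⟫_ℂ‖ ^ 2 := by
  refine Summable.of_nonneg_of_le (fun _ => sq_nonneg _) (fun n => ?_)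
    ((hasSum_row c).summable.mul_right (‖x‖ ^ 2))
  rw [← mul_pow]
  gcongr
  exact norm_inner_le_norm _ _

/-- The Hankel operator. -/
def hank (c : H12) : L2 →L[ℂ] L2 :=
  LinearMap.mkContinuous
    { toFun := fun x => ⟨fun n => ⟪row c n, x⟫_ℂ, memℓp_of_summable_sq (summable_out c x)⟩
      map_add' := fun x y => by
        apply Subtype.ext
        funext n
        exact inner_add_right _ _ _
      map_smul' := fun r x => by
        apply Subtype.ext
        funext n
        exact inner_smul_right _ _ _ } ‖c.toL2‖ (by
    intro x
    refine (sq_le_sq₀ (norm_nonneg _) (by positivity)).1 ?_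
    rw [mul_pow]
    refine hasSum_le (fun n => ?_) (hasSum_sq _) ((hasSum_row c).mul_right (‖x‖ ^ 2))
    rw [← mul_pow]
    have := norm_inner_le_norm (𝕜 := ℂ) (row c n) x
    exact pow_le_pow_left₀ (norm_nonneg _) this 2)

lemma hank_apply (c : H12) (x : L2) (n : ℕ) : (hank c x : ℕ → ℂ) n = ⟪row c n, x⟫_ℂ := rfl

lemma norm_hank_le (c : H12) : ‖hank c‖ ≤ ‖c.toL2‖ :=
  LinearMap.mkContinuous_norm_le _ (norm_nonneg _) _

lemma hank_isHankel (c : H12) : IsHankelOp c.1 (hank c) := by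
  intro x n
  rw [hank_apply, inner_row]

lemma hank_unique (c : H12) (Γ : L2 →L[ℂ] L2) (h : IsHankelOp c.1 Γ) : Γ = hank c := by
  ext x n
  rw [h x n, hank_isHankel c x n]

/-! ### Linear structure on `H12` -/

lemma inH12_iff (c : ℕ → ℂ) : InH12 c ↔ Memℓp (wSeq c) 2 := by
  refine ⟨memℓp_wSeq, fun h => ?_⟩
  have h1 := summable_sq_of_memℓp h
  simp only [norm_wSeq_sq] at h1
  refine ⟨memℓp_of_summable_sq (Summable.of_nonneg_of_le (fun _ => sq_nonneg _) (fun n => ?_) h1),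
    Summable.of_nonneg_of_le (fun _ => by positivity) (fun n => ?_) h1⟩
  · have : (0 : ℝ) ≤ n * ‖c n‖ ^ 2 := by positivity
    linarith
  · have : (0 : ℝ) ≤ ‖c n‖ ^ 2 := by positivity
    linarith

/-- The inverse of `toL2`. -/
def ofL2 (x : L2) : H12 :=
  ⟨fun n => ((Real.sqrt (1 + (n : ℝ)) : ℂ))⁻¹ * (x : ℕ → ℂ) n, by
    rw [inH12_iff]
    have : wSeq (fun n => ((Real.sqrt (1 + (n : ℝ)) : ℂ))⁻¹ * (x : ℕ → ℂ) n) = x := by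
      funext n
      have hs : (Real.sqrt (1 + (n : ℝ)) : ℂ) ≠ 0 := by
        simp only [ne_eq, Complex.ofReal_eq_zero]
        positivity
      simp [wSeq, hs]
    rw [this]
    exact lp.memℓp x⟩

lemma ofL2_apply (x : L2) (n : ℕ) :
  (ofL2 x).1 n = ((Real.sqrt (1 + (n : ℝ)) : ℂ))⁻¹ * (x : ℕ → ℂ) n := rfl

lemma toL2_ofL2 (x : L2) : (ofL2 x).toL2 = x := by
  apply Subtype.ext
  funext n
  have hs : (Real.sqrt (1 + (n : ℝ)) : ℂ) ≠ 0 := by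
    simp only [ne_eq, Complex.ofReal_eq_zero]
    positivity
  simp [H12.toL2, wSeq, hs, ofL2_apply]

lemma ofL2_toL2 (c : H12) : ofL2 c.toL2 = c := H12.toL2_injective (toL2_ofL2 _)

lemma row_ofL2_sub (x y : L2) (n : ℕ) : row (ofL2 (x - y)) n = row (ofL2 x) n - row (ofL2 y) n := by
  ext p
  simp [row_apply, ofL2_apply, mul_sub]

lemma hank_sub (x y : L2) : hank (ofL2 (x - y)) = hank (ofL2 x) - hank (ofL2 y) := by
  ext z n
  simp [hank_apply, row_ofL2_sub]

lemma dist_hank_le (c d : H12) : dist (hank c) (hank d) ≤ dist c d := by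
  have h : dist c d = ‖c.toL2 - d.toL2‖ := by
    rw [← dist_eq_norm]; rfl
  rw [h, dist_eq_norm]
  have := norm_hank_le (ofL2 (c.toL2 - d.toL2))
  rwa [hank_sub, toL2_ofL2, ofL2_toL2, ofL2_toL2] at this

lemma continuous_hank : Continuous hank :=
  (LipschitzWith.of_dist_le_mul (K := 1) (fun c d => by simpa using dist_hank_le c d)).continuous

lemma isInducing_toL2 : IsInducing H12.toL2 := ⟨rfl⟩

lemma continuous_ofL2 : Continuous ofL2 := by
  rw [isInducing_toL2.continuous_iff]
  have : H12.toL2 ∘ ofL2 = id := by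
    funext x
    exact toL2_ofL2 x
  rw [this]
  exact continuous_id

/-- truncation -/
def trunc (c : H12) (N : ℕ) : H12 :=
  ofL2 (∑ i ∈ Finset.range N, lp.single 2 i (c.toL2 i))

lemma tendsto_trunc (c : H12) : Tendsto (trunc c) atTop (𝓝 c) := by
  have h := (lp.hasSum_single (p := 2) (by norm_num) c.toL2).tendsto_sum_nat
  have h2 := (continuous_ofL2.tendsto c.toL2).comp h
  rw [ofL2_toL2] at h2
  exact h2

lemma trunc_apply (c : H12) (N n : ℕ) (h : N ≤ n) : (trunc c N).1 n = 0 := by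
  have : (∑ i ∈ Finset.range N, (lp.single 2 i (c.toL2 i) : L2) : L2) n = 0 := by
    rw [lp.coeFn_sum, Finset.sum_apply]
    refine Finset.sum_eq_zero fun i hi => ?_
    rw [lp.single_apply_ne]
    have := Finset.mem_range.1 hi
    omega
  rw [trunc, ofL2_apply, this, mul_zero]

/-! ### Compactness -/

lemma compact_of_finite (c : H12) (N : ℕ) (h : ∀ n, N ≤ n → c.1 n = 0) :
    IsCompactOperator (hank c) := by
  have h1 : hank c = ∑ n ∈ Finset.range N,
      (ContinuousLinearMap.toSpanSingleton ℂ (lp.single 2 n (1 : ℂ) : L2)).comp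
        (innerSL ℂ (row c n)) := by
    ext x m
    simp only [hank_apply, _root_.sum_apply, lp.coeFn_sum, Finset.sum_apply,
      ContinuousLinearMap.comp_apply, innerSL_apply_apply, ContinuousLinearMap.toSpanSingleton_apply,
      lp.coeFn_smul, Pi.smul_apply, lp.single_apply, Pi.single_apply, smul_eq_mul, mul_ite,
      mul_one, mul_zero, Finset.sum_ite_eq, Finset.mem_range]
    split_ifs with hm
    · rfl
    · have : row c m = 0 := by
        ext p
        simp [row_apply, h (m + p) (by omega)]
      simp [this]
  rw [h1]
  refine Finset.sum_induction _ (fun T : L2 →L[ℂ] L2 => IsCompactOperator T)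
    (fun a b ha hb => ha.add hb) isCompactOperator_zero ?_
  intro n _
  have : IsCompactOperator (innerSL ℂ (row c n)) :=
    isCompactOperator_of_locallyCompactSpace_dom (innerSL ℂ (row c n))
  exact this.clm_comp (ContinuousLinearMap.toSpanSingleton ℂ (lp.single 2 n (1 : ℂ) : L2))

lemma hank_compact (c : H12) : IsCompactOperator (hank c) := by
  refine isCompactOperator_of_tendsto (l := atTop) (F := fun N => hank (trunc c N))
    ((continuous_hank.tendsto c).comp (tendsto_trunc c)) ?_
  exact Eventually.of_forall fun N => compact_of_finite _ N (fun n hn => trunc_apply c N n hn)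

lemma opT_compact (c : H12) : IsCompactOperator (opT (hank c)) :=
  (hank_compact c).comp_clm _

lemma continuous_opT : Continuous fun c => opT (hank c) := by
  have h2 : Continuous fun c => ContinuousLinearMap.adjoint (hank c) :=
    (LinearIsometryEquiv.continuous _).comp continuous_hank
  exact continuous_hank.clm_comp h2


/-! ### Characterisation of the good set -/

/-- No nonzero eigenvector with positive eigenvalue is orthogonal to `e0`. -/
def Good (c : H12) : Prop :=
  ∀ a : ℝ, 0 < a → ∀ v : L2, opT (hank c) v = (a : ℂ) • v → (v : ℕ → ℂ) 0 = 0 → v = 0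

lemma inner_e0 (v : L2) : ⟪v, e0⟫_ℂ = conj ((v : ℕ → ℂ) 0) := by
  rw [e0, lp.inner_single_right]
  simp

lemma good_iff (c : H12) : (∃ Γ : L2 →L[ℂ] L2, IsHankelOp c.1 Γ ∧
      ∀ a : ℝ, 0 < a → Module.End.HasEigenvalue (opT Γ).toLinearMap (a : ℂ) →
        Module.finrank ℂ (Module.End.eigenspace (opT Γ).toLinearMap (a : ℂ)) = 1 ∧
        ∃ v : L2, (opT Γ) v = (a : ℂ) • v ∧ ⟪v, e0⟫_ℂ ≠ 0) ↔ Good c := by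
  constructor
  · rintro ⟨Γ, hΓ, h⟩ a ha v hv hv0
    have hE := hank_unique c Γ hΓ
    subst hE
    by_contra hne
    have hmem : v ∈ Module.End.eigenspace (opT (hank c)).toLinearMap (a : ℂ) :=
      Module.End.mem_eigenspace_iff.2 hv
    have hev : Module.End.HasEigenvalue (opT (hank c)).toLinearMap (a : ℂ) :=
      Module.End.hasEigenvalue_of_hasEigenvector ⟨hmem, hne⟩
    obtain ⟨h1, u, hu, hu0⟩ := h a ha hev
    have hmemu : u ∈ Module.End.eigenspace (opT (hank c)).toLinearMap (a : ℂ) :=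
      Module.End.mem_eigenspace_iff.2 hu
    have hne' : (⟨v, hmem⟩ : Module.End.eigenspace (opT (hank c)).toLinearMap (a : ℂ)) ≠ 0 := by
      intro h0
      exact hne (congrArg Subtype.val h0)
    obtain ⟨r, hr⟩ := (finrank_eq_one_iff_of_nonzero' _ hne').1 h1 ⟨u, hmemu⟩
    have hr' : r • v = u := congrArg Subtype.val hr
    apply hu0
    rw [inner_e0, ← hr']
    simp [hv0]
  · intro h
    refine ⟨hank c, hank_isHankel c, fun a ha hev => ?_⟩
    obtain ⟨v, hmem, hne⟩ := hev.exists_hasEigenvector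
    have hv : opT (hank c) v = (a : ℂ) • v := Module.End.mem_eigenspace_iff.1 hmem
    have hv0 : (v : ℕ → ℂ) 0 ≠ 0 := fun h0 => hne (h a ha v hv h0)
    refine ⟨?_, v, hv, ?_⟩
    · have hne' : (⟨v, hmem⟩ : Module.End.eigenspace (opT (hank c)).toLinearMap (a : ℂ)) ≠ 0 := by
        intro h0
        exact hne (congrArg Subtype.val h0)
      rw [finrank_eq_one_iff_of_nonzero' _ hne']
      rintro ⟨w, hw⟩
      have hw' : opT (hank c) w = (a : ℂ) • w := Module.End.mem_eigenspace_iff.1 hw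
      refine ⟨(w : ℕ → ℂ) 0 / (v : ℕ → ℂ) 0, ?_⟩
      apply Subtype.ext
      have hz := h a ha (((w : ℕ → ℂ) 0 / (v : ℕ → ℂ) 0) • v - w) (by
        rw [map_sub, map_smul, hv, hw', smul_sub, smul_comm]) (by
        change (w : ℕ → ℂ) 0 / (v : ℕ → ℂ) 0 * (v : ℕ → ℂ) 0 - (w : ℕ → ℂ) 0 = 0
        rw [div_mul_cancel₀ _ hv0, sub_self])
      exact sub_eq_zero.1 hz
    · rw [inner_e0]
      simpa using hv0

/-! ### The `G_δ` property -/

/-- The bad sets. -/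
def Bad (δ : ℝ) : Set H12 :=
  {c | ∃ a : ℝ, δ ≤ a ∧ ∃ v : L2, ‖v‖ = 1 ∧ (v : ℕ → ℂ) 0 = 0 ∧ opT (hank c) v = (a : ℂ) • v}

lemma continuous_coord : Continuous fun v : L2 => (v : ℕ → ℂ) 0 := by
  have : (fun v : L2 => (v : ℕ → ℂ) 0) = fun v : L2 => ⟪(lp.single 2 0 1 : L2), v⟫_ℂ := by
    funext v
    rw [lp.inner_single_left]
    simp
  rw [this]
  fun_prop

lemma isClosed_bad (δ : ℝ) (hδ : 0 < δ) : IsClosed (Bad δ) := by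
  apply IsSeqClosed.isClosed
  intro u c hu hc
  choose a ha v hv1 hv0 hv using hu
  set T := opT (hank c) with hT
  have hTu : Tendsto (fun k => opT (hank (u k))) atTop (𝓝 T) :=
    (continuous_opT.tendsto c).comp hc
  obtain ⟨M, hM⟩ := (hTu.norm).bddAbove_range
  have haM : ∀ k, a k ∈ Set.Icc δ M := by
    intro k
    refine ⟨ha k, ?_⟩
    have h1 : ‖opT (hank (u k)) (v k)‖ = a k := by
      rw [hv k, norm_smul, hv1 k, mul_one, Complex.norm_real, Real.norm_eq_abs,
        abs_of_pos (hδ.trans_le (ha k))]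
    have h2 := (opT (hank (u k))).le_opNorm (v k)
    rw [h1, hv1 k, mul_one] at h2
    exact h2.trans (hM ⟨k, rfl⟩)
  obtain ⟨K, hK, hKs⟩ := (opT_compact c).image_closedBall_subset_compact
    (f := (opT (hank c)).toLinearMap) 1
  have hmem : ∀ k, (a k, T (v k)) ∈ Set.Icc δ M ×ˢ K := by
    intro k
    refine ⟨haM k, hKs ⟨v k, ?_, rfl⟩⟩
    simp [hv1 k]
  obtain ⟨⟨b, w⟩, hbw, φ, hφ, hlim⟩ := (isCompact_Icc.prod hK).tendsto_subseq hmem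
  have hb : Tendsto (fun k => a (φ k)) atTop (𝓝 b) :=
    (continuous_fst.tendsto (b, w)).comp hlim
  have hw : Tendsto (fun k => T (v (φ k))) atTop (𝓝 w) :=
    (continuous_snd.tendsto (b, w)).comp hlim
  have hδb : δ ≤ b := hbw.1.1
  have hbne : (b : ℂ) ≠ 0 := by
    exact_mod_cast (hδ.trans_le hδb).ne'
  have hbC : Tendsto (fun k => ((a (φ k) : ℝ) : ℂ)) atTop (𝓝 (b : ℂ)) :=
    (Complex.continuous_ofReal.tendsto b).comp hb
  have hTφ := hTu.comp hφ.tendsto_atTop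
  have hdiff : Tendsto (fun k => (opT (hank (u (φ k))) - T) (v (φ k))) atTop (𝓝 0) := by
    have h0 : Tendsto (fun k => ‖opT (hank (u (φ k))) - T‖) atTop (𝓝 0) :=
      tendsto_iff_norm_sub_tendsto_zero.1 hTφ
    refine squeeze_zero_norm (fun k => ?_) h0
    have h2 := (opT (hank (u (φ k))) - T).le_opNorm (v (φ k))
    rwa [hv1, mul_one] at h2
  have hsum : Tendsto (fun k => (a (φ k) : ℂ) • v (φ k)) atTop (𝓝 w) := by
    have h3 := hdiff.add hw
    rw [zero_add] at h3
    refine h3.congr fun k => ?_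
    rw [← hv (φ k)]
    simp
  have hvlim : Tendsto (fun k => v (φ k)) atTop (𝓝 ((b : ℂ)⁻¹ • w)) := by
    refine ((hbC.inv₀ hbne).smul hsum).congr fun k => ?_
    have hne : ((a (φ k) : ℝ) : ℂ) ≠ 0 := by
      exact_mod_cast (hδ.trans_le (ha _)).ne'
    rw [smul_smul, inv_mul_cancel₀ hne, one_smul]
  refine ⟨b, hδb, (b : ℂ)⁻¹ • w, ?_, ?_, ?_⟩
  · refine tendsto_nhds_unique hvlim.norm ?_
    simp [hv1]
  · refine tendsto_nhds_unique ((continuous_coord.tendsto _).comp hvlim) ?_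
    simp [Function.comp_def, hv0]
  · have h4 := ((T.continuous.tendsto _).comp hvlim)
    rw [smul_smul, mul_inv_cancel₀ hbne, one_smul]
    exact tendsto_nhds_unique h4 hw

lemma good_eq : {c | Good c} = ⋂ n : ℕ, (Bad (1 / ((n : ℝ) + 1)))ᶜ := by
  ext c
  simp only [Set.mem_ofPred_eq, Set.mem_iInter, Set.mem_compl_iff]
  constructor
  · rintro h n ⟨a, ha, v, hv1, hv0, hv⟩
    have := h a (lt_of_lt_of_le (by positivity) ha) v hv hv0
    rw [this] at hv1
    simp at hv1
  · intro h a ha v hv hv0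
    by_contra hne
    obtain ⟨n, hn⟩ := exists_nat_one_div_lt ha
    refine h n ⟨a, hn.le, ((‖v‖⁻¹ : ℝ) : ℂ) • v, ?_, ?_, ?_⟩
    · rw [norm_smul, Complex.norm_real, norm_inv, norm_norm, inv_mul_cancel₀ (norm_ne_zero_iff.2 hne)]
    · simp [hv0]
    · rw [map_smul, hv, smul_comm]

lemma isGδ_good : IsGδ {c | Good c} := by
  rw [good_eq]
  refine IsGδ.iInter_of_isOpen fun n => (isClosed_bad _ (by positivity)).isOpen_compl


/-! ### Finite matrices -/

open Matrix

/-- Krylov matrix of `A` at the first basis vector. -/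
def kry {R : Type*} [CommRing R] {m : ℕ} (A : Matrix (Fin (m + 2)) (Fin (m + 2)) R) :
    Matrix (Fin (m + 2)) (Fin (m + 2)) R :=
  Matrix.of fun i j => (A ^ (j : ℕ)) i 0

lemma kry_inj {m : ℕ} (A : Matrix (Fin (m + 2)) (Fin (m + 2)) ℂ) (hA : Aᴴ = A)
    (hdet : (kry A).det ≠ 0) (a : ℝ) (w : Fin (m + 2) → ℂ) (hw : A *ᵥ w = (a : ℂ) • w)
    (h0 : w 0 = 0) : w = 0 := by
  have h1 : star w ᵥ* A = (a : ℂ) • star w := by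
    have := congrArg star hw
    rw [Matrix.star_mulVec, hA] at this
    rw [this]
    ext i
    simp
  have h2 : ∀ j : ℕ, star w ᵥ* (A ^ j) = ((a : ℂ) ^ j) • star w := by
    intro j
    induction j with
    | zero => simp
    | succ j ih =>
      rw [pow_succ, ← Matrix.vecMul_vecMul, ih, Matrix.smul_vecMul, h1, smul_smul, pow_succ]
  have h3 : star w ᵥ* kry A = 0 := by
    ext j
    have := congrFun (h2 j) 0
    have h4 : (star w ᵥ* kry A) j = (star w ᵥ* (A ^ (j : ℕ))) 0 := rfl
    rw [h4, this]
    simp [h0]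
  have h5 := Matrix.eq_zero_of_vecMul_eq_zero hdet h3
  simpa using h5

/-- Hankel matrix. -/
def hm (m : ℕ) (c : ℕ → ℂ) : Matrix (Fin (m + 2)) (Fin (m + 2)) ℂ :=
  Matrix.of fun i j => c ((i : ℕ) + j)

/-- The model sequence. -/
def dd (m : ℕ) : ℕ → ℂ := fun n => if n = m ∨ n = m + 1 then 1 else 0

lemma hm_dd_herm (m : ℕ) : (hm m (dd m))ᴴ = hm m (dd m) := by
  ext i j
  simp only [Matrix.conjTranspose_apply, hm, Matrix.of_apply, dd, add_comm (j : ℕ) (i : ℕ)]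
  split_ifs <;> simp

lemma tri_zero (m : ℕ) (i k : Fin (m + 2)) (h : (k : ℕ) + 1 < i) :
    (hm m (dd m) * (hm m (dd m))ᴴ) i k = 0 := by
  rw [hm_dd_herm, Matrix.mul_apply]
  refine Finset.sum_eq_zero fun j _ => ?_
  simp only [hm, Matrix.of_apply, dd]
  split_ifs with h1 h2
  · omega
  · simp
  · simp
  · simp

lemma tri_one (m : ℕ) (i k : Fin (m + 2)) (h : (k : ℕ) + 1 = i) :
    (hm m (dd m) * (hm m (dd m))ᴴ) i k = 1 := by
  rw [hm_dd_herm, Matrix.mul_apply]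
  have hlt : m - (k : ℕ) < m + 2 := by omega
  rw [Finset.sum_eq_single (⟨m - (k : ℕ), hlt⟩ : Fin (m + 2))]
  · have := i.2
    simp only [hm, Matrix.of_apply, dd]
    rw [if_pos (by omega), if_pos (by omega), mul_one]
  · intro j _ hj
    have hj' : (j : ℕ) ≠ m - k := fun h' => hj (Fin.ext h')
    have := i.2
    simp only [hm, Matrix.of_apply, dd]
    split_ifs with h1 h2
    · omega
    · simp
    · simp
    · simp
  · simp

lemma tri_pow {m : ℕ} (A : Matrix (Fin (m + 2)) (Fin (m + 2)) ℂ)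
    (h0 : ∀ i k : Fin (m + 2), (k : ℕ) + 1 < i → A i k = 0)
    (h1 : ∀ i k : Fin (m + 2), (k : ℕ) + 1 = i → A i k = 1) (j : ℕ) :
    ∀ i : Fin (m + 2), (j < i → (A ^ j) i 0 = 0) ∧ (j = i → (A ^ j) i 0 = 1) := by
  induction j with
  | zero =>
    intro i
    refine ⟨fun h => ?_, fun h => ?_⟩
    · have : i ≠ 0 := fun h' => by simp [h'] at h
      simp [this]
    · have : i = 0 := Fin.ext (by simp [← h])
      simp [this]
  | succ j ih =>
    intro i
    rw [pow_succ', Matrix.mul_apply]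
    refine ⟨fun h => ?_, fun h => ?_⟩
    · refine Finset.sum_eq_zero fun k _ => ?_
      by_cases hk : j < k
      · rw [(ih k).1 hk, mul_zero]
      · rw [h0 i k (by omega), zero_mul]
    · have := i.2
      rw [Finset.sum_eq_single (⟨j, by omega⟩ : Fin (m + 2))]
      · rw [(ih _).2 rfl, h1 _ _ (by simpa using h), mul_one]
      · intro k _ hk
        have hk' : (k : ℕ) ≠ j := fun h' => hk (Fin.ext h')
        by_cases hjk : j < k
        · rw [(ih k).1 hjk, mul_zero]
        · rw [h0 i k (by omega), zero_mul]
      · simp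

lemma det_kry_dd (m : ℕ) : (kry (hm m (dd m) * (hm m (dd m))ᴴ)).det ≠ 0 := by
  have hp := tri_pow _ (tri_zero m) (tri_one m)
  rw [Matrix.det_of_isUpperTriangular]
  · rw [Finset.prod_eq_one]
    · exact one_ne_zero
    · intro i _
      exact (hp i i).2 rfl
  · intro i j hij
    exact (hp j i).1 hij

/-- polynomial version of the Krylov determinant. -/
lemma exists_poly {m : ℕ} (C D : Matrix (Fin (m + 2)) (Fin (m + 2)) ℂ) :
    ∃ q : Polynomial ℂ, ∀ s : ℝ,
      q.eval (s : ℂ) = (kry (((s : ℂ) • C + D) * ((s : ℂ) • C + D)ᴴ)).det := by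
  let P : Matrix (Fin (m + 2)) (Fin (m + 2)) (Polynomial ℂ) :=
    ((Polynomial.X : Polynomial ℂ) • C.map Polynomial.C + D.map Polynomial.C) *
      ((Polynomial.X : Polynomial ℂ) • Cᴴ.map Polynomial.C + Dᴴ.map Polynomial.C)
  refine ⟨(kry P).det, fun s => ?_⟩
  have h := RingHom.map_det (Polynomial.evalRingHom (s : ℂ)) (kry P)
  rw [Polynomial.coe_evalRingHom] at h
  rw [h]
  congr 1
  have hP : (Polynomial.evalRingHom (s : ℂ)).mapMatrix P =
      ((s : ℂ) • C + D) * ((s : ℂ) • C + D)ᴴ := by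
    simp only [P, map_mul, map_add]
    congr 1
    · ext i j
      simp
      exact mul_comm _ _
    · ext i j
      simp
      exact mul_comm _ _
  ext i j
  have h2 := congrFun (congrFun (map_pow (Polynomial.evalRingHom (s : ℂ)).mapMatrix P (j : ℕ)) i) 0
  rw [hP] at h2
  exact h2

/-! ### Bridge -/

lemma hank_apply_fin (c : H12) (m : ℕ) (hc : ∀ n, m + 2 ≤ n → c.1 n = 0) (x : L2) (n : ℕ) :
    (hank c x : ℕ → ℂ) n = ∑ p : Fin (m + 2), c.1 (n + p) * (x : ℕ → ℂ) p := by
  rw [hank_isHankel c x n, tsum_eq_sum (s := Finset.range (m + 2)), ← Fin.sum_univ_eq_sum_range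
    (fun p => c.1 (n + p) * (x : ℕ → ℂ) p)]
  intro p hp
  rw [Finset.mem_range] at hp
  rw [hc _ (by omega), zero_mul]

lemma adj_apply (c : H12) (x : L2) (n : ℕ) :
    (ContinuousLinearMap.adjoint (hank c) x : ℕ → ℂ) n =
      ∑' p, conj (c.1 (p + n)) * (x : ℕ → ℂ) p := by
  have h1 : (ContinuousLinearMap.adjoint (hank c) x : ℕ → ℂ) n =
      ⟪(lp.single 2 n 1 : L2), ContinuousLinearMap.adjoint (hank c) x⟫_ℂ := by
    rw [lp.inner_single_left]
    simp
  rw [h1, ContinuousLinearMap.adjoint_inner_right, lp.inner_eq_tsum]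
  refine tsum_congr fun p => ?_
  rw [hank_apply, lp.inner_single_right]
  simp [row_apply, mul_comm]

lemma adj_apply_fin (c : H12) (m : ℕ) (hc : ∀ n, m + 2 ≤ n → c.1 n = 0) (x : L2) (n : ℕ) :
    (ContinuousLinearMap.adjoint (hank c) x : ℕ → ℂ) n =
      ∑ p : Fin (m + 2), conj (c.1 (p + n)) * (x : ℕ → ℂ) p := by
  rw [adj_apply, tsum_eq_sum (s := Finset.range (m + 2)), ← Fin.sum_univ_eq_sum_range
    (fun p => conj (c.1 (p + n)) * (x : ℕ → ℂ) p)]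
  intro p hp
  rw [Finset.mem_range] at hp
  rw [hc _ (by omega), map_zero, zero_mul]

lemma good_of_det (c : H12) (m : ℕ) (hc : ∀ n, m + 2 ≤ n → c.1 n = 0)
    (C : Matrix (Fin (m + 2)) (Fin (m + 2)) ℂ) (s : ℝ) (hs : hm m c.1 = ((s : ℂ))⁻¹ • C)
    (hs0 : s ≠ 0) (hdet : (kry (C * Cᴴ)).det ≠ 0) : Good c := by
  intro a ha v hv hv0
  have hane : (a : ℂ) ≠ 0 := by exact_mod_cast ha.ne'
  have hcoord : ∀ n, (hank c (ContinuousLinearMap.adjoint (hank c) v) : ℕ → ℂ) n =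
      (a : ℂ) * (v : ℕ → ℂ) n := by
    intro n
    have : (opT (hank c) v : ℕ → ℂ) n = ((a : ℂ) • v : L2) n := by rw [hv]
    simpa using! this
  have hbig : ∀ n, m + 2 ≤ n → (v : ℕ → ℂ) n = 0 := by
    intro n hn
    have h1 := hcoord n
    rw [hank_apply_fin c m hc, Finset.sum_eq_zero] at h1
    · simpa [hane] using h1.symm
    · intro p _
      rw [hc _ (by omega), zero_mul]
  have hmat : (hm m c.1 * (hm m c.1)ᴴ) *ᵥ (fun i : Fin (m + 2) => (v : ℕ → ℂ) i) =
      (a : ℂ) • (fun i : Fin (m + 2) => (v : ℕ → ℂ) i) := by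
    ext i
    rw [← Matrix.mulVec_mulVec]
    have h1 := hcoord i
    rw [hank_apply_fin c m hc] at h1
    simp only [adj_apply_fin c m hc] at h1
    rw [Pi.smul_apply, smul_eq_mul, ← h1]
    simp only [Matrix.mulVec, dotProduct, Matrix.conjTranspose_apply, hm, Matrix.of_apply]
    rfl
  have hsC : (s : ℂ) ≠ 0 := by exact_mod_cast hs0
  have hCe : C = (s : ℂ) • hm m c.1 := by
    rw [hs, smul_smul, mul_inv_cancel₀ hsC, one_smul]
  have hw : (fun i : Fin (m + 2) => (v : ℕ → ℂ) i) = 0 := by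
    refine kry_inj (C * Cᴴ) (by simp [Matrix.conjTranspose_mul]) hdet (s * s * a) _ ?_ (by simpa using hv0)
    have h5 : C * Cᴴ = ((s : ℂ) * s) • (hm m c.1 * (hm m c.1)ᴴ) := by
      rw [hCe]
      ext i j
      simp [Matrix.conjTranspose_smul, smul_smul, mul_assoc]
    rw [h5, Matrix.smul_mulVec, hmat, smul_smul]
    push_cast
    rfl
  ext n
  by_cases hn : n < m + 2
  · exact congrFun hw ⟨n, hn⟩
  · exact hbig n (by omega)

lemma inH12_dd (m : ℕ) : InH12 (dd m) := by
  have hfin : ∀ n, n ∉ Finset.range (m + 2) → dd m n = 0 := by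
    intro n hn
    rw [Finset.mem_range] at hn
    exact if_neg (by omega)
  refine ⟨memℓp_of_summable_sq ?_, ?_⟩
  · exact summable_of_ne_finset_zero (s := Finset.range (m + 2)) fun n hn => by simp [hfin n hn]
  · exact summable_of_ne_finset_zero (s := Finset.range (m + 2)) fun n hn => by simp [hfin n hn]

lemma toL2_apply (c : H12) (n : ℕ) :
    (c.toL2 : ℕ → ℂ) n = (Real.sqrt (1 + (n : ℝ)) : ℂ) * c.1 n := rfl

lemma finite_mem_closure (c : H12) (m : ℕ) (hc : ∀ n, m + 2 ≤ n → c.1 n = 0) :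
    c ∈ closure {c | Good c} := by
  let d : H12 := ⟨dd m, inH12_dd m⟩
  let u : ℕ → H12 := fun k => ofL2 (c.toL2 + (((k : ℝ) + 1 : ℝ) : ℂ)⁻¹ • d.toL2)
  have hu : ∀ k n, (u k).1 n = c.1 n + (((k : ℝ) + 1 : ℝ) : ℂ)⁻¹ * dd m n := by
    intro k n
    have hs : (Real.sqrt (1 + (n : ℝ)) : ℂ) ≠ 0 := by
      simp only [ne_eq, Complex.ofReal_eq_zero]
      positivity
    have h1 : (u k).1 n = ((Real.sqrt (1 + (n : ℝ)) : ℂ))⁻¹ *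
      ((Real.sqrt (1 + (n : ℝ)) : ℂ) * c.1 n +
        (((k : ℝ) + 1 : ℝ) : ℂ)⁻¹ * ((Real.sqrt (1 + (n : ℝ)) : ℂ) * dd m n)) := rfl
    rw [h1]
    field_simp
  have hlim : Tendsto u atTop (𝓝 c) := by
    have h1 : Tendsto (fun k : ℕ => (((k : ℝ) + 1 : ℝ) : ℂ)⁻¹) atTop (𝓝 0) := by
      have h2 := (Complex.continuous_ofReal.tendsto 0).comp
        (tendsto_one_div_add_atTop_nhds_zero_nat (𝕜 := ℝ))
      rw [Complex.ofReal_zero] at h2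
      refine h2.congr fun k => ?_
      simp
    have h3 : Tendsto (fun k : ℕ => c.toL2 + (((k : ℝ) + 1 : ℝ) : ℂ)⁻¹ • d.toL2) atTop
        (𝓝 (c.toL2 + (0 : ℂ) • d.toL2)) := tendsto_const_nhds.add (h1.smul_const _)
    rw [zero_smul, add_zero] at h3
    have h4 := (continuous_ofL2.tendsto _).comp h3
    rw [ofL2_toL2] at h4
    exact h4
  obtain ⟨q, hq⟩ := exists_poly (hm m c.1) (hm m (dd m))
  have hq0 : q ≠ 0 := by
    intro h0
    have h1 := hq 0
    rw [h0] at h1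
    simp only [Polynomial.eval_zero, Complex.ofReal_zero, zero_smul, zero_add] at h1
    exact det_kry_dd m h1.symm
  have hfin : {k : ℕ | q.IsRoot (((k : ℝ) + 1 : ℝ) : ℂ)}.Finite := by
    refine (Polynomial.finite_setOfPred_isRoot hq0).preimage (Function.Injective.injOn ?_)
    intro k l hkl
    have := Complex.ofReal_injective hkl
    have h2 : (k : ℝ) = l := by linarith
    exact_mod_cast h2
  have hev : ∀ᶠ k : ℕ in atTop, u k ∈ {c | Good c} := by
    have h1 := hfin.compl_mem_cofinite
    rw [Nat.cofinite_eq_atTop] at h1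
    filter_upwards [h1] with k hk
    have hk' : q.eval (((k : ℝ) + 1 : ℝ) : ℂ) ≠ 0 := hk
    rw [hq] at hk'
    have hkpos : (k : ℝ) + 1 ≠ 0 := by positivity
    have hkC : (((k : ℝ) + 1 : ℝ) : ℂ) ≠ 0 := by exact_mod_cast hkpos
    refine good_of_det (u k) m ?_ _ ((k : ℝ) + 1) ?_ hkpos hk'
    · intro n hn
      rw [hu, hc n hn, dd, if_neg (by omega)]
      simp
    · rw [smul_add, smul_smul, inv_mul_cancel₀ hkC, one_smul]
      ext i j
      simp only [hm, Matrix.of_apply, hu, Matrix.add_apply, Matrix.smul_apply, smul_eq_mul]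
  exact mem_closure_of_tendsto hlim hev

lemma dense_good : Dense {c | Good c} := by
  intro c
  rw [← closure_closure]
  refine mem_closure_of_tendsto ((tendsto_trunc c).comp (tendsto_add_atTop_nat 2)) ?_
  exact Eventually.of_forall fun m => finite_mem_closure _ m fun n hn => trunc_apply c _ n hn

end HankelAux

/-- The set of `c ∈ h^{1/2}` such that every positive eigenvalue of `Γ_c Γ_c*` is simple and
the orthogonal projection of `e₀` on each corresponding eigenspace is nonzero (equivalently,
some eigenvector has nonzero inner product with `e₀`) is a dense `G_δ` subset of `h^{1/2}`. -/
theorem statement11 :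
    Dense {c : H12 | ∃ Γ : L2 →L[ℂ] L2, IsHankelOp c.1 Γ ∧
      ∀ a : ℝ, 0 < a → Module.End.HasEigenvalue (opT Γ).toLinearMap (a : ℂ) →
        Module.finrank ℂ (Module.End.eigenspace (opT Γ).toLinearMap (a : ℂ)) = 1 ∧
        ∃ v : L2, (opT Γ) v = (a : ℂ) • v ∧ ⟪v, e0⟫_ℂ ≠ 0} ∧
    IsGδ {c : H12 | ∃ Γ : L2 →L[ℂ] L2, IsHankelOp c.1 Γ ∧
      ∀ a : ℝ, 0 < a → Module.End.HasEigenvalue (opT Γ).toLinearMap (a : ℂ) →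
        Module.finrank ℂ (Module.End.eigenspace (opT Γ).toLinearMap (a : ℂ)) = 1 ∧
        ∃ v : L2, (opT Γ) v = (a : ℂ) • v ∧ ⟪v, e0⟫_ℂ ≠ 0} := by
  simp only [HankelAux.good_iff]
  exact ⟨HankelAux.dense_good, HankelAux.isGδ_good⟩

end
end

section
/- Let H be a complex Hilbert space and let A be a positive self-adjoint bounded operator on H of trace class, i.e. for some (equivalently, every) Hilbert basis (ε_i) of H one has Σ_i ⟨A ε_i, ε_i⟩ < ∞, this sum being independent of the basis and denoted Tr(A). Let e ∈ H and N ≥ 1 be such that A(e), A²(e), …, A^N(e) are linearly independent. Let G be the N×N matrix with entries G_{k,ℓ} = ⟨A^{k+ℓ} e, e⟩ for 0 ≤ k, ℓ ≤ N−1, and let B be the N×N matrix obtained from G by replacing its last column (the column ℓ = N−1) by the column (⟨A^{k+N} e, e⟩)_{0≤k≤N−1}. Then det G ≠ 0 and Tr(A) ≥ det B / det G, with equality if and only if the range of A is N-dimensional and e belongs to the range of A. -/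
open scoped InnerProductSpace

noncomputable section

variable {H : Type*} [NormedAddCommGroup H] [InnerProductSpace ℂ H] [CompleteSpace H]

/-- The Gram matrix `G_{k,ℓ} = ⟨A^{k+ℓ} e, e⟩`, `0 ≤ k, ℓ ≤ N-1`. -/
def gramG (A : H →L[ℂ] H) (e : H) (N : ℕ) : Matrix (Fin N) (Fin N) ℂ :=
  fun k l => ⟪e, (A ^ ((k : ℕ) + (l : ℕ))) e⟫_ℂ

/-- The matrix `B`: the Gram matrix `G` with its last column replaced by
`(⟨A^{k+N} e, e⟩)_{0 ≤ k ≤ N-1}`. -/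
def gramB (A : H →L[ℂ] H) (e : H) (N : ℕ) : Matrix (Fin N) (Fin N) ℂ :=
  fun k l => if (l : ℕ) = N - 1 then ⟪e, (A ^ ((k : ℕ) + N)) e⟫_ℂ
    else ⟪e, (A ^ ((k : ℕ) + (l : ℕ))) e⟫_ℂ

section
variable {H : Type*} [NormedAddCommGroup H] [InnerProductSpace ℂ H] [CompleteSpace H]

theorem aux_hasSum_proj {ι : Type*} (b : HilbertBasis ι ℂ H) (V : Submodule ℂ H)
    [FiniteDimensional ℂ V] {κ : Type*} [Fintype κ] (v : OrthonormalBasis κ ℂ V) (F : H →L[ℂ] H) :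
    HasSum (fun i => ⟪b i, V.starProjection (F (b i))⟫_ℂ) (∑ j, ⟪(v j : H), F (v j)⟫_ℂ) := by
  have h : ∀ j ∈ (Finset.univ : Finset κ),
      HasSum (fun i => ⟪(ContinuousLinearMap.adjoint F) (v j : H), b i⟫_ℂ * ⟪b i, (v j : H)⟫_ℂ)
        ⟪(ContinuousLinearMap.adjoint F) (v j : H), (v j : H)⟫_ℂ :=
    fun j _ => b.hasSum_inner_mul_inner _ _
  have h2 := hasSum_sum h
  simp only [ContinuousLinearMap.adjoint_inner_left] at h2
  convert h2 using 2 with i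
  rw [v.starProjection_eq_sum_rankOne]
  simp

theorem aux_pos_zero (A : H →L[ℂ] H) (hsa : IsSelfAdjoint A)
    (hpos : ∀ h : H, 0 ≤ (⟪A h, h⟫_ℂ).re) (h : H) (h0 : (⟪A h, h⟫_ℂ).re = 0) : A h = 0 := by
  have hs : ∀ x y : H, ⟪A x, y⟫_ℂ = ⟪x, A y⟫_ℂ := fun x y => hsa.isSymmetric x y
  have key : ∀ t : ℝ, 0 ≤ 2 * t * ‖A h‖ ^ 2 + t ^ 2 * (⟪A (A h), A h⟫_ℂ).re := by
    intro t
    have h1 := hpos (h + (t : ℂ) • A h)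
    have h2 : (⟪A h, A h⟫_ℂ) = ((‖A h‖ ^ 2 : ℝ) : ℂ) := by
      rw [inner_self_eq_norm_sq_to_K]; norm_cast
    simp only [map_add, map_smul, inner_add_left, inner_add_right, inner_smul_left,
      inner_smul_right, Complex.conj_ofReal] at h1
    rw [hs (A h) h, h2] at h1
    simp only [Complex.add_re, Complex.re_ofReal_mul, Complex.ofReal_re, h0] at h1
    nlinarith
  by_contra hne
  have hp : 0 < ‖A h‖ ^ 2 := by positivity
  set c := (⟪A (A h), A h⟫_ℂ).re with hc
  have hcn : 0 ≤ c := hpos _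
  have := key (-(‖A h‖ ^ 2 / (c + 1)))
  have h3 : 2 * (-(‖A h‖ ^ 2 / (c + 1))) * ‖A h‖ ^ 2 + (-(‖A h‖ ^ 2 / (c + 1))) ^ 2 * c
      = - ((‖A h‖ ^ 2) ^ 2 / (c + 1) ^ 2 * (c + 2)) := by
    field_simp
    ring
  rw [h3] at this
  have : 0 < (‖A h‖ ^ 2) ^ 2 / (c + 1) ^ 2 * (c + 2) := by positivity
  linarith

theorem aux_hasSum_compl (A : H →L[ℂ] H) (hsa : IsSelfAdjoint A)
    {ι : Type*} (b : HilbertBasis ι ℂ H)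
    (htrace : Summable fun i : ι => (⟪A (b i), b i⟫_ℂ).re)
    (V : Submodule ℂ H)
    [FiniteDimensional ℂ V] {κ : Type*} [Fintype κ] (v : OrthonormalBasis κ ℂ V) :
    HasSum (fun i => (⟪A (b i - V.starProjection (b i)), b i - V.starProjection (b i)⟫_ℂ).re)
      ((∑' i : ι, (⟪A (b i), b i⟫_ℂ).re) - (∑ j, ⟪(v j : H), A (v j)⟫_ℂ).re) := by
  have hs : ∀ x y : H, ⟪A x, y⟫_ℂ = ⟪x, A y⟫_ℂ := fun x y => hsa.isSymmetric x y
  have h1 := Complex.hasSum_re (aux_hasSum_proj b V v A)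
  have h2 := Complex.hasSum_re (aux_hasSum_proj b V v (A ∘L V.starProjection))
  have e2 : (∑ j, ⟪(v j : H), (A ∘L V.starProjection) (v j)⟫_ℂ)
      = ∑ j, ⟪(v j : H), A (v j)⟫_ℂ := by
    refine Finset.sum_congr rfl fun j _ => ?_
    rw [ContinuousLinearMap.comp_apply, Submodule.starProjection_eq_self_iff.mpr (v j).2]
  rw [e2] at h2
  have key := ((htrace.hasSum.sub h1).sub h1).add h2
  rw [sub_add_cancel] at key
  refine key.congr_fun ?_
  · intro i
    simp only [map_sub, inner_sub_left, inner_sub_right, Complex.sub_re,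
      ContinuousLinearMap.comp_apply]
    have a1 : (⟪A (b i), V.starProjection (b i)⟫_ℂ).re
        = (⟪b i, V.starProjection (A (b i))⟫_ℂ).re := by
      rw [← Submodule.inner_starProjection_left_eq_right, ← inner_conj_symm, Complex.conj_re]
    have a2 : (⟪A (V.starProjection (b i)), b i⟫_ℂ).re
        = (⟪b i, V.starProjection (A (b i))⟫_ℂ).re := by
      rw [← Submodule.inner_starProjection_left_eq_right, hs]
    have a3 : (⟪A (V.starProjection (b i)), V.starProjection (b i)⟫_ℂ).re
        = (⟪b i, V.starProjection (A (V.starProjection (b i)))⟫_ℂ).re := by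
      rw [← Submodule.inner_starProjection_left_eq_right V (b i), ← hs]
    rw [a1, a2, a3]
    ring

theorem aux_trace_basis (A : H →L[ℂ] H) (hsa : IsSelfAdjoint A) (e : H) (n : ℕ)
    (V : Submodule ℂ H) [FiniteDimensional ℂ V] {κ : Type*} [Fintype κ]
    (v : OrthonormalBasis κ ℂ V) (u : Module.Basis (Fin (n + 1)) ℂ V)
    (hu : ∀ k, (u k : H) = (A ^ (k : ℕ)) e) :
    (gramB A e (n + 1)).det = (gramG A e (n + 1)).det * ∑ j, ⟪(v j : H), A (v j)⟫_ℂ := by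
  classical
  have hs : ∀ x y : H, ⟪A x, y⟫_ℂ = ⟪x, A y⟫_ℂ := fun x y => hsa.isSymmetric x y
  have hpow : ∀ (k : ℕ) (x y : H), ⟪(A ^ k) x, y⟫_ℂ = ⟪x, (A ^ k) y⟫_ℂ :=
    fun k x y => (hsa.pow k).isSymmetric x y
  let T : V →ₗ[ℂ] V := (V.orthogonalProjectionOnto ∘L A ∘L V.subtypeL).toLinearMap
  have hT : ∀ x : V, T x = V.orthogonalProjectionOnto (A x) := fun x => rfl
  have t1 : LinearMap.trace ℂ V T = ∑ j, ⟪(v j : H), A (v j)⟫_ℂ := by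
    rw [LinearMap.trace_eq_sum_inner T v]
    refine Finset.sum_congr rfl fun j _ => ?_
    rw [hT, ← Submodule.inner_orthogonalProjectionOnto_eq_of_mem_left]
  set c : Fin (n + 1) → ℂ := fun k => u.repr (T (u (Fin.last n))) k with hc
  have t2 : LinearMap.trace ℂ V T = c (Fin.last n) := by
    rw [LinearMap.trace_eq_matrix_trace ℂ u T, Matrix.trace, Fin.sum_univ_castSucc]
    rw [Finset.sum_eq_zero, zero_add]
    · simp [LinearMap.toMatrix_apply, hc]
    · intro k _
      have : T (u k.castSucc) = u k.succ := by
        rw [hT, hu]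
        have : A ((A ^ ((k.castSucc : Fin (n+1)) : ℕ)) e) = u k.succ := by
          rw [hu, Fin.val_succ, pow_succ']; rfl
        rw [this, Submodule.orthogonalProjectionOnto_mem_subspace_eq_self]
      rw [Matrix.diag_apply, LinearMap.toMatrix_apply, this, u.repr_self,
        Finsupp.single_eq_of_ne]
      exact (Fin.castSucc_lt_succ).ne
  have t3 : (gramG A e (n + 1)).mulVec c = fun k : Fin (n + 1) => ⟪e, (A ^ ((k : ℕ) + (n + 1))) e⟫_ℂ := by
    ext k
    have q1 : (T (u (Fin.last n)) : H) = ∑ l, c l • (A ^ (l : ℕ)) e := by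
      have := congrArg Subtype.val (u.sum_repr (T (u (Fin.last n))))
      rw [← this, Submodule.coe_sum]
      refine Finset.sum_congr rfl fun l _ => ?_
      rw [Submodule.coe_smul, hu]
    have q2 : ⟪(u k : H), (T (u (Fin.last n)) : H)⟫_ℂ = ⟪(u k : H), A (u (Fin.last n))⟫_ℂ := by
      rw [hT]
      exact (Submodule.inner_orthogonalProjectionOnto_eq_of_mem_left (u k) _)
    have q3 : A (u (Fin.last n) : H) = (A ^ (n + 1)) e := by
      rw [hu, pow_succ']; rfl
    rw [q1, q3, hu, inner_sum, hpow _ _ ((A ^ (n + 1)) e)] at q2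
    have q4 : (A ^ (k : ℕ)) ((A ^ (n + 1)) e) = (A ^ ((k : ℕ) + (n + 1))) e := by
      rw [pow_add A (k : ℕ) (n + 1)]; rfl
    rw [q4] at q2
    rw [← q2, Matrix.mulVec, dotProduct]
    refine Finset.sum_congr rfl fun l _ => ?_
    rw [hpow, map_smul, inner_smul_right, gramG, pow_add, mul_comm]
    rfl
  have t4 : gramB A e (n + 1) = (gramG A e (n + 1)).updateCol (Fin.last n)
      ((gramG A e (n + 1)).mulVec c) := by
    rw [t3]
    ext k l
    rw [Matrix.updateCol_apply]
    simp only [gramB, gramG, Fin.ext_iff, Fin.val_last, Nat.add_sub_cancel]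
  rw [t4, ← Matrix.cramer_apply, Matrix.cramer_eq_adjugate_mulVec, Matrix.mulVec_mulVec,
    Matrix.adjugate_mul, Matrix.smul_mulVec, Matrix.one_mulVec, ← t1, t2]
  rfl

end

/-- Let `A` be a positive self-adjoint trace class operator on a Hilbert space `H`, with trace
`Tr(A) = Σ_i ⟨A ε_i, ε_i⟩` computed in any Hilbert basis `(ε_i)`. If `A(e), …, A^N(e)` are
linearly independent, then `det G ≠ 0`, `det B / det G` is real and `Tr(A) ≥ det B / det G`,
with equality if and only if the range of `A` is `N`-dimensional and `e` lies in the range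
of `A`. -/
theorem statement15 (A : H →L[ℂ] H) (hsa : IsSelfAdjoint A)
    (hpos : ∀ h : H, 0 ≤ (⟪A h, h⟫_ℂ).re)
    {ι : Type*} (b : HilbertBasis ι ℂ H)
    (htrace : Summable fun i : ι => (⟪A (b i), b i⟫_ℂ).re)
    (e : H) (N : ℕ) (hN : 1 ≤ N)
    (hind : LinearIndependent ℂ (fun k : Fin N => (A ^ ((k : ℕ) + 1)) e)) :
    (gramG A e N).det ≠ 0 ∧
    ((gramB A e N).det / (gramG A e N).det).im = 0 ∧
    ((gramB A e N).det / (gramG A e N).det).re ≤ ∑' i : ι, (⟪A (b i), b i⟫_ℂ).re ∧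
    ((∑' i : ι, (⟪A (b i), b i⟫_ℂ).re) = ((gramB A e N).det / (gramG A e N).det).re ↔
      (LinearMap.rank A.toLinearMap = N ∧ e ∈ LinearMap.range A.toLinearMap)) := by
  have hs : ∀ x y : H, ⟪A x, y⟫_ℂ = ⟪x, A y⟫_ℂ := fun x y => hsa.isSymmetric x y
  have hpow : ∀ (k : ℕ) (x y : H), ⟪(A ^ k) x, y⟫_ℂ = ⟪x, (A ^ k) y⟫_ℂ :=
    fun k x y => (hsa.pow k).isSymmetric x y
  obtain ⟨n, rfl⟩ : ∃ n, N = n + 1 := ⟨N - 1, by omega⟩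
  have hli : LinearIndependent ℂ (fun k : Fin (n + 1) => (A ^ (k : ℕ)) e) := by
    refine LinearIndependent.of_comp A.toLinearMap ?_
    convert hind using 2 with k
    rw [pow_succ']; rfl
  let V : Submodule ℂ H := Submodule.span ℂ (Set.range (fun k : Fin (n + 1) => (A ^ (k : ℕ)) e))
  have hVfin : FiniteDimensional ℂ V := FiniteDimensional.span_of_finite ℂ (Set.finite_range _)
  have hVdim : Module.finrank ℂ V = n + 1 := by
    simpa using finrank_span_eq_card hli
  let u : Module.Basis (Fin (n + 1)) ℂ V := Module.Basis.span hli
  have hu : ∀ k, (u k : H) = (A ^ (k : ℕ)) e := fun k =>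
    congrArg Subtype.val (Module.Basis.span_apply hli k)
  let v := stdOrthonormalBasis ℂ V
  have hG : (gramG A e (n + 1)).det ≠ 0 := by
    have := (Matrix.det_gram_ne_zero_iff_linearIndependent (𝕜 := ℂ)).mpr hli
    have hGe : gramG A e (n + 1) = Matrix.gram ℂ (fun k : Fin (n + 1) => (A ^ (k : ℕ)) e) := by
      ext k l
      rw [Matrix.gram_apply, hpow, gramG, pow_add]
      rfl
    rw [hGe]
    exact this
  have hB := aux_trace_basis A hsa e n V v u hu
  have hdiv : (gramB A e (n + 1)).det / (gramG A e (n + 1)).det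
      = ∑ j, ⟪(v j : H), A (v j)⟫_ℂ := by
    rw [hB, mul_div_cancel_left₀ _ hG]
  have hsum := aux_hasSum_compl A hsa b htrace V v
  have hnn : ∀ i, 0 ≤ (⟪A (b i - V.starProjection (b i)), b i - V.starProjection (b i)⟫_ℂ).re :=
    fun i => hpos _
  rw [hdiv]
  refine ⟨hG, ?_, ?_, ?_⟩
  · rw [Complex.im_sum]
    refine Finset.sum_eq_zero fun j _ => ?_
    rw [← Complex.conj_eq_iff_im, inner_conj_symm, hs]
  · have := hsum.nonneg hnn
    linarith
  have hUdim : Module.finrank ℂ (Submodule.span ℂ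
      (Set.range (fun k : Fin (n + 1) => (A ^ ((k : ℕ) + 1)) e))) = n + 1 := by
    simpa using finrank_span_eq_card hind
  have hpr : ∀ k : ℕ, (A ^ (k + 1)) e ∈ LinearMap.range A.toLinearMap := by
    intro k
    refine ⟨(A ^ k) e, ?_⟩
    rw [pow_succ']; rfl
  have hUle : Submodule.span ℂ (Set.range (fun k : Fin (n + 1) => (A ^ ((k : ℕ) + 1)) e))
      ≤ LinearMap.range A.toLinearMap := by
    rw [Submodule.span_le]
    rintro _ ⟨k, rfl⟩
    exact hpr k
  constructor
  · intro heq
    rw [heq, sub_self] at hsum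
    have hz := (hasSum_zero_iff_of_nonneg hnn).mp hsum
    have hAb : ∀ i, A (b i - V.starProjection (b i)) = 0 := fun i =>
      aux_pos_zero A hsa hpos _ (congrFun hz i)
    have hAP : A = A ∘L V.starProjection := by
      refine ContinuousLinearMap.ext_on (s := Set.range b) ?_ ?_
      · exact Submodule.dense_iff_topologicalClosure_eq_top.mpr b.dense_span
      · rintro _ ⟨i, rfl⟩
        have := hAb i
        rw [map_sub, sub_eq_zero] at this
        exact this
    have hPA : ∀ x, A x = V.starProjection (A x) := by
      intro x
      refine ext_inner_left ℂ fun y => ?_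
      rw [← Submodule.inner_starProjection_left_eq_right, ← hs, ← hs]
      conv_lhs => rw [hAP]
      rfl
    have hle : LinearMap.range A.toLinearMap ≤ V := by
      rintro _ ⟨x, rfl⟩
      change A x ∈ V
      rw [hPA x]
      exact Submodule.starProjection_apply_mem V _
    have hRfin : FiniteDimensional ℂ (LinearMap.range A.toLinearMap) :=
      Submodule.finiteDimensional_of_le hle
    have h1 : n + 1 ≤ Module.finrank ℂ (LinearMap.range A.toLinearMap) := by
      rw [← hUdim]; exact Submodule.finrank_mono hUle
    have hEq : LinearMap.range A.toLinearMap = V :=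
      Submodule.eq_of_le_of_finrank_le hle (by rw [hVdim]; exact h1)
    constructor
    · rw [LinearMap.rank, hEq, ← Module.finrank_eq_rank, hVdim]
    · rw [hEq]
      exact Submodule.subset_span ⟨0, by simp⟩
  · rintro ⟨hr, he⟩
    have hRdim : Module.finrank ℂ (LinearMap.range A.toLinearMap) = n + 1 :=
      Module.finrank_eq_of_rank_eq hr
    have hRfin : FiniteDimensional ℂ (LinearMap.range A.toLinearMap) :=
      Module.finite_of_finrank_pos (by omega)
    have hle : V ≤ LinearMap.range A.toLinearMap := by
      refine Submodule.span_le.mpr ?_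
      rintro _ ⟨k, rfl⟩
      obtain ⟨k, hk⟩ := k
      cases k with
      | zero => simpa using he
      | succ k => exact hpr k
    have hEq : V = LinearMap.range A.toLinearMap :=
      Submodule.eq_of_le_of_finrank_eq hle (by rw [hVdim, hRdim])
    have hz : ∀ x, A (x - V.starProjection x) = 0 := by
      intro x
      rw [← inner_self_eq_zero (𝕜 := ℂ), hs]
      refine Submodule.starProjection_inner_eq_zero x _ ?_
      exact hEq.ge ⟨_, rfl⟩
    simp only [hz, inner_zero_left, Complex.zero_re] at hsum
    have := hsum.unique hasSum_zero
    linarith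

end
end
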